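/- arXiv:0901.1395 — 2 statements merged into one kernel-verified Lean document; each statement's English description precedes it below -/
import Mathlib

section
/- A finite-dimensional simple Lie algebra 𝔤 of dimension > 3 over an algebraically closed field of characteristic 0 admits no nonzero antiderivation, i.e., no nonzero linear map D: 𝔤→𝔤 with D([x,y]) = −[D(x),y] − [x,D(y)] for all x,y. -/
/-!
Fix a Cartan subalgebra `H`. The antiderivations form a subspace of `End L` stable under commutators
with `ad h`, `h ∈ H`, so if it is nonzero then by Lie's theorem it contains a common eigenvector:
a nonzero antiderivation `D` of some weight `θ`, mapping each root space `L_β` into `L_{β+θ}`.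
For `x ∈ L_β` the defining identity becomes `(2β + θ)(h) • D x = -⁅D h, x⁆` (`smul_apply_eq`).

The hypothesis `dim L > 3` enters only through `exists_lie_ne_zero`: a nonzero `u ∈ L_α` fails to
commute with some `L_b`, where `b` is a root not proportional to `α`. Otherwise the `sl₂`-triple
of `α` would span an ideal, which by simplicity would be all of `L`.

* If `θ ≠ 0`, then `D h = θ(h) • u` with `u ∈ L_θ`, and `u ≠ 0` contradicts `exists_lie_ne_zero`.
* If `θ = 0`, then `D` acts on each `L_β` by a scalar `c_β`, with `β ∘ D = -2 c_β β` on `H`. For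
  `⁅L_α, L_b⁆ ≠ 0` and `α, b` independent, linearity gives `c_α = c_b = c_{α+b}`, while the
  antiderivation rule gives `c_{α+b} = -c_α - c_b`; hence `c_α = 0`, and `D` vanishes on `H`.
* So `D` vanishes on `H` in all cases, and `(2β + θ) D x = 0` on `L_β`. If `D x ≠ 0` then `θ = -2β`,
  so `D` kills every other root space and `D x ∈ L_{-β}` commutes with every `L_b`, `b ≠ 0, ±β`,
  contradicting `exists_lie_ne_zero` for `-β`.
-/

namespace NoAntiderivation

set_option linter.unusedSectionVars false

open LieAlgebra LieAlgebra.IsKilling LieModule Module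

variable {K L : Type*} [Field K] [IsAlgClosed K] [CharZero K] [LieRing L] [LieAlgebra K L]
  [FiniteDimensional K L] [LieAlgebra.IsSimple K L] {H : LieSubalgebra K L} [H.IsCartanSubalgebra]

/-! ### Root spaces -/

/-- Root spaces are defined as generalized simultaneous eigenspaces; since elements of `H` are
`ad`-semisimple, they are honest eigenspaces. -/
lemma mem_rootSpace_iff {β : H → K} {x : L} :
    x ∈ rootSpace H β ↔ ∀ h : H, ⁅(h : L), x⁆ = β h • x := by
  refine ⟨fun hx h ↦ lie_eq_smul_of_mem_rootSpace hx h, fun hx ↦ ?_⟩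
  exact (mem_genWeightSpace L β x).mpr fun h ↦ ⟨1, by simp [hx h]⟩

lemma mem_rootSpace_zero_iff {x : L} : x ∈ rootSpace H (0 : H → K) ↔ x ∈ H := by
  rw [rootSpace_zero_eq K L H]; simp

lemma exists_weight {β : H → K} {x : L} (hx : x ∈ rootSpace H β) (h0 : x ≠ 0) :
    ∃ b : Weight K H L, (b : H → K) = β :=
  ⟨⟨β, fun h ↦ h0 (by simpa [h] using hx)⟩, rfl⟩

/-- The root space of `α ≠ 0` is a line, spanned by any of its nonzero vectors. -/
lemma exists_smul {α : Weight K H L} (hα : α.IsNonZero) {e x : L} (he : e ∈ rootSpace H α)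
    (he0 : e ≠ 0) (hx : x ∈ rootSpace H α) : ∃ c : K, x = c • e := by
  obtain ⟨c, hc⟩ := (finrank_eq_one_iff_of_nonzero' (⟨e, he⟩ : rootSpace H α)
    (by simpa using he0)).mp (finrank_rootSpace_eq_one α hα) ⟨x, hx⟩
  exact ⟨c, by simpa using (congrArg Subtype.val hc).symm⟩

lemma lie_mem {a b : H → K} {x y : L} (hx : x ∈ rootSpace H a) (hy : y ∈ rootSpace H b) :
    ⁅x, y⁆ ∈ rootSpace H (a + b) :=
  lie_mem_genWeightSpace_of_mem_genWeightSpace hx hy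

lemma induction_rootSpace {P : L → Prop} (h0 : P 0) (hadd : ∀ x y, P x → P y → P (x + y))
    (hw : ∀ (β : Weight K H L), ∀ x ∈ rootSpace H β, P x) (x : L) : P x := by
  have hx : x ∈ (⨆ χ : Weight K H L, genWeightSpace L χ) := by
    rw [LieModule.iSup_genWeightSpace_eq_top' K H L]; trivial
  induction hx using LieSubmodule.iSup_induction' with
  | mem i x hx => exact hw i x hx
  | zero => exact h0
  | add x y _ _ hx hy => exact hadd x y hx hy

/-- If `b` vanishes wherever `a` does, then `b` is a multiple of `a`. -/
lemma exists_eq_smul {a b : Weight K H L} (h : ∀ t : H, a t = 0 → b t = 0) :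
    ∃ k : K, (b : H → K) = k • (a : H → K) := by
  by_cases ha : ∃ t, a t ≠ 0
  · obtain ⟨t, ht⟩ := ha
    refine ⟨b t / a t, funext fun s ↦ ?_⟩
    have h1 := h (s - (a s / a t) • t) (by
      rw [← Weight.toLinear_apply, map_sub, map_smul]
      simp [ht])
    rw [← Weight.toLinear_apply, map_sub, map_smul] at h1
    simp only [Weight.toLinear_apply, smul_eq_mul] at h1
    simp only [Pi.smul_apply, smul_eq_mul]
    rw [sub_eq_zero.mp h1]
    ring
  · push Not at ha
    exact ⟨0, funext fun s ↦ by simp [h s (ha s)]⟩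

/-! ### Root vectors do not commute with everything off their line -/

/-- In a simple Lie algebra of dimension greater than `3`, a nonzero root vector for `α` does not
commute with all root spaces of roots outside the line of `α`: otherwise the `sl₂`-triple of `α`
would span a proper ideal. -/
lemma exists_lie_ne_zero (hdim : 3 < finrank K L) {α : Weight K H L} (hα : α.IsNonZero)
    {u : L} (hu : u ∈ rootSpace H α) (hu0 : u ≠ 0) :
    ∃ b : Weight K H L, b.IsNonZero ∧ (∀ k : K, (b : H → K) ≠ k • (α : H → K)) ∧
      ∃ y ∈ rootSpace H b, ⁅u, y⁆ ≠ 0 := by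
  by_contra! hcon
  obtain ⟨h, e, f, ht, he, hf⟩ := exists_isSl2Triple_of_weight_isNonZero hα
  have he0 : e ≠ 0 := ht.e_ne_zero
  have hf0 : f ≠ 0 := ht.f_ne_zero
  have hf' : f ∈ rootSpace H ((-α : Weight K H L) : H → K) := by simpa using hf
  have hh : h = coroot α := ht.h_eq_coroot hα he hf
  have hprop (β : Weight K H L) (h0 : β.IsNonZero) (h1 : (β : H → K) ≠ α)
      (h2 : (β : H → K) ≠ -α) (k : K) : (β : H → K) ≠ k • (α : H → K) := by
    intro hk
    rcases eq_neg_or_eq_of_eq_smul α β h0 k hk with h | h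
    · exact h2 (by rw [h]; rfl)
    · exact h1 (by rw [h])
  -- `e` commutes with the root spaces of all roots other than `± α`
  have hE (β : H → K) (h0 : β ≠ 0) (h1 : β ≠ α) (h2 : β ≠ -α) (x : L)
      (hx : x ∈ rootSpace H β) : ⁅e, x⁆ = 0 := by
    by_cases hx0 : x = 0
    · simp [hx0]
    obtain ⟨b, rfl⟩ := exists_weight hx hx0
    obtain ⟨c, rfl⟩ := exists_smul hα hu hu0 he
    rw [smul_lie, hcon b h0 (hprop b h0 h1 h2) x hx, smul_zero]
  -- `f` maps the sum of these root spaces to itself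
  have hshift (β : H → K) (h0 : β ≠ 0) (h1 : β ≠ α) (h2 : β ≠ -α) (x : L)
      (hx : x ∈ rootSpace H β) (hx0 : x ≠ 0) :
      -(α : H → K) + β ≠ 0 ∧ -(α : H → K) + β ≠ α ∧ -(α : H → K) + β ≠ -α := by
    obtain ⟨b, rfl⟩ := exists_weight hx hx0
    refine ⟨fun hc ↦ h1 (neg_add_eq_zero.mp hc).symm, fun hc ↦ hprop b h0 h1 h2 2 ?_,
      fun hc ↦ h0 (by simpa using hc)⟩
    rw [neg_add_eq_iff_eq_add] at hc
    rw [hc, two_smul]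
  -- `h = ⁅e, f⁆` then commutes with them too, and so does `f`, since `⁅h, f⁆ = -2 f`
  have hHx (β : H → K) (h0 : β ≠ 0) (h1 : β ≠ α) (h2 : β ≠ -α) (x : L)
      (hx : x ∈ rootSpace H β) : ⁅h, x⁆ = 0 := by
    by_cases hx0 : x = 0
    · simp [hx0]
    obtain ⟨g0, g1, g2⟩ := hshift β h0 h1 h2 x hx hx0
    rw [← ht.lie_e_f, lie_lie, hE _ g0 g1 g2 _ (lie_mem hf hx), hE β h0 h1 h2 x hx]
    simp
  have hF (β : H → K) (h0 : β ≠ 0) (h1 : β ≠ α) (h2 : β ≠ -α) (x : L)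
      (hx : x ∈ rootSpace H β) : ⁅f, x⁆ = 0 := by
    by_cases hx0 : x = 0
    · simp [hx0]
    obtain ⟨g0, g1, g2⟩ := hshift β h0 h1 h2 x hx hx0
    have h3 := hHx _ g0 g1 g2 _ (lie_mem hf hx)
    rw [leibniz_lie, ht.lie_h_f_nsmul, hHx β h0 h1 h2 x hx, lie_zero, add_zero, neg_lie,
      neg_eq_zero, ← Nat.cast_smul_eq_nsmul K, smul_lie] at h3
    simpa using h3
  -- hence the span of the triple is an ideal, of dimension at most `3`
  let S : Submodule K L := Submodule.span K {e, f, h}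
  have heS : e ∈ S := Submodule.subset_span (by simp)
  have hfS : f ∈ S := Submodule.subset_span (by simp)
  have hhS : h ∈ S := Submodule.subset_span (by simp)
  have key (x : L) : ⁅x, e⁆ ∈ S ∧ ⁅x, f⁆ ∈ S ∧ ⁅x, h⁆ ∈ S := by
    refine induction_rootSpace (H := H)
      (P := fun x ↦ ⁅x, e⁆ ∈ S ∧ ⁅x, f⁆ ∈ S ∧ ⁅x, h⁆ ∈ S) (by simp) ?_ ?_ x
    · intro x y hx hy
      simp only [add_lie]
      exact ⟨S.add_mem hx.1 hy.1, S.add_mem hx.2.1 hy.2.1, S.add_mem hx.2.2 hy.2.2⟩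
    · intro β x hx
      by_cases h0 : (β : H → K) = 0
      · rw [h0, mem_rootSpace_zero_iff] at hx
        rw [mem_rootSpace_iff.mp he ⟨x, hx⟩, mem_rootSpace_iff.mp hf ⟨x, hx⟩]
        refine ⟨S.smul_mem _ heS, S.smul_mem _ hfS, ?_⟩
        have h5 : ⁅(⟨x, hx⟩ : H), coroot α⁆ = 0 := trivial_lie_zero _ _ _ _
        have h6 : ⁅x, h⁆ = 0 := by
          rw [hh]
          simpa using congrArg Subtype.val h5
        rw [h6]
        exact S.zero_mem
      by_cases h1 : (β : H → K) = α
      · rw [h1] at hx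
        obtain ⟨c, rfl⟩ := exists_smul hα he he0 hx
        simp only [smul_lie]
        refine ⟨by simp, S.smul_mem _ (by rwa [ht.lie_e_f]), S.smul_mem _ ?_⟩
        rw [← lie_skew, ht.lie_h_e_nsmul]
        exact S.neg_mem (nsmul_mem heS _)
      by_cases h2 : (β : H → K) = -α
      · rw [h2] at hx
        obtain ⟨c, rfl⟩ := exists_smul (Weight.IsNonZero.neg hα) hf' hf0 (by simpa using hx)
        simp only [smul_lie]
        refine ⟨S.smul_mem _ ?_, by simp, S.smul_mem _ ?_⟩
        · rw [← lie_skew, ht.lie_e_f]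
          exact S.neg_mem hhS
        · rw [← lie_skew, ht.lie_h_f_nsmul, neg_neg]
          exact nsmul_mem hfS _
      rw [← lie_skew, ← lie_skew x f, ← lie_skew x h, hE β h0 h1 h2 x hx, hF β h0 h1 h2 x hx,
        hHx β h0 h1 h2 x hx]
      simp
  let I : LieIdeal K L :=
    { S with
      lie_mem := by
        intro x m hm
        change m ∈ S at hm
        change ⁅x, m⁆ ∈ S
        induction hm using Submodule.span_induction with
        | mem m hm =>
          rcases hm with rfl | rfl | rfl
          exacts [(key x).1, (key x).2.1, (key x).2.2]
        | zero => simp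
        | add a b _ _ ha hb => rw [lie_add]; exact S.add_mem ha hb
        | smul c a _ ha => rw [lie_smul]; exact S.smul_mem _ ha }
  have heI : e ∈ I := heS
  rcases IsSimple.eq_bot_or_eq_top (R := K) I with hI | hI
  · rw [hI] at heI
    exact he0 (by simpa using heI)
  · have hS : S = ⊤ := by
      have : I.toSubmodule = ⊤ := by rw [hI]; rfl
      exact this
    classical
    have h7 := finrank_span_finset_le_card (R := K) ({e, f, h} : Finset L)
    have h8 : Set.finrank K ((({e, f, h} : Finset L)) : Set L) = finrank K L := by
      rw [Set.finrank]
      have h10 : Submodule.span K ((({e, f, h} : Finset L)) : Set L) = ⊤ := by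
        simpa [S] using hS
      rw [h10, finrank_top]
    have h9 : ({e, f, h} : Finset L).card ≤ 3 := Finset.card_le_three
    omega

/-! ### Antiderivations of a given weight -/

section Homogeneous

variable {D : L →ₗ[K] L} (hD : ∀ x y : L, D ⁅x, y⁆ = - ⁅D x, y⁆ - ⁅x, D y⁆)
  {θ : Dual K H} (hθ : ∀ (h : H) (x : L), ⁅(h : L), D x⁆ - D ⁅(h : L), x⁆ = θ h • D x)

include hθ in
/-- An antiderivation of weight `θ` maps `L_β` into `L_{β+θ}`. -/
lemma lie_apply_eq {β : H → K} {x : L} (hx : x ∈ rootSpace H β) (h : H) :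
    ⁅(h : L), D x⁆ = (β h + θ h) • D x := by
  have h1 := hθ h x
  rw [mem_rootSpace_iff.mp hx, map_smul, sub_eq_iff_eq_add] at h1
  rw [h1, add_smul, add_comm]

include hD hθ in
/-- The antiderivation rule for `⁅h, x⁆` with `x ∈ L_β`. -/
lemma smul_apply_eq {β : H → K} {x : L} (hx : x ∈ rootSpace H β) (h : H) :
    (2 * β h + θ h) • D x = - ⁅D h, x⁆ := by
  have h1 := hD h x
  rw [mem_rootSpace_iff.mp hx, map_smul, lie_apply_eq hθ hx, eq_sub_iff_add_eq, ← add_smul] at h1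
  rw [← h1]
  congr 1
  ring

include hD hθ in
/-- An antiderivation of weight zero kills the Cartan subalgebra. -/
lemma apply_eq_zero_of_weight_zero (hdim : 3 < finrank K L) (hθ0 : θ = 0) (t : H) :
    D t = 0 := by
  subst hθ0
  have hDH (t : H) : D t ∈ H := by
    rw [← mem_rootSpace_zero_iff, mem_rootSpace_iff]
    intro h
    have := lie_apply_eq hθ (β := 0) (mem_rootSpace_zero_iff.mpr t.2) h
    simpa using this
  -- on a root space `D` acts by a scalar that describes its transpose on the root
  have hsc (β : Weight K H L) (hβ : β.IsNonZero) {x : L} (hx : x ∈ rootSpace H β)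
      (hx0 : x ≠ 0) : ∃ c : K, D x = c • x ∧ ∀ t : H, β ⟨D t, hDH t⟩ = -2 * c * β t := by
    obtain ⟨h, hh⟩ : ∃ h, β h ≠ 0 := by
      by_contra! hc
      exact hβ (funext hc)
    have h1 (t : H) : (2 * β t) • D x = - (β ⟨D t, hDH t⟩ • x) := by
      have := smul_apply_eq hD hθ hx t
      rw [mem_rootSpace_iff.mp hx ⟨D t, hDH t⟩] at this
      simpa using this
    have h2 : D x = (-(β ⟨D h, hDH h⟩) / (2 * β h)) • x := by
      rw [div_eq_inv_mul, mul_smul, neg_smul, ← h1, smul_smul, inv_mul_cancel₀, one_smul]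
      simpa using hh
    refine ⟨_, h2, fun t ↦ ?_⟩
    have h3 := h1 t
    rw [h2, smul_smul, ← neg_smul] at h3
    have h4 := smul_left_injective K hx0 h3
    linear_combination h4
  have hker (β : Weight K H L) : β ⟨D t, hDH t⟩ = 0 := by
    by_cases hβ : β.IsZero
    · rw [hβ.eq]
      rfl
    obtain ⟨x, hx, hx0⟩ := β.exists_ne_zero
    obtain ⟨b, hb, hk, y, hy, hxy⟩ := exists_lie_ne_zero hdim hβ hx hx0
    have hz := lie_mem hx hy
    obtain ⟨g, hg⟩ := exists_weight hz hxy
    have hg0 : g.IsNonZero := by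
      intro hg0
      rw [Weight.IsZero, hg] at hg0
      exact hk (-1) (by rw [neg_one_smul]; exact (neg_eq_of_add_eq_zero_right hg0).symm)
    obtain ⟨c₁, h1, h1'⟩ := hsc β hβ hx hx0
    obtain ⟨c₂, h2, h2'⟩ := hsc b hb hy (by rintro rfl; simp at hxy)
    obtain ⟨c₃, h3, h3'⟩ := hsc g hg0 (by rwa [hg]) hxy
    have h4 : c₃ = -c₁ - c₂ := by
      apply smul_left_injective K hxy
      simp only
      rw [← h3, hD, h1, h2]
      simp [sub_smul]
    have h5 (s : H) : (2 * c₁ + c₂) * β s + (c₁ + 2 * c₂) * b s = 0 := by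
      have h6 := h3' s
      rw [hg] at h6
      simp only [Pi.add_apply] at h6
      rw [h1' s, h2' s, h4] at h6
      have h7 : (2 : K) * ((2 * c₁ + c₂) * β s + (c₁ + 2 * c₂) * b s) = 0 := by
        linear_combination -h6
      simpa using h7
    have h8 : c₁ + 2 * c₂ = 0 := by
      by_contra h8
      refine hk (-(2 * c₁ + c₂) / (c₁ + 2 * c₂)) (funext fun s ↦ ?_)
      simp only [Pi.smul_apply, smul_eq_mul]
      field_simp
      linear_combination h5 s
    have h9 : ∃ s, β s ≠ 0 := by
      by_contra! hc
      exact hβ (funext hc)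
    obtain ⟨s, hs⟩ := h9
    have h10 : 2 * c₁ + c₂ = 0 := by
      have := h5 s
      rw [h8, zero_mul, add_zero] at this
      exact (mul_eq_zero.mp this).resolve_right hs
    have h11 : c₁ = 0 := by
      have : (3 : K) * c₁ = 0 := by linear_combination 2 * h10 - h8
      simpa using this
    rw [h1', h11]
    simp
  have h12 : (⟨D t, hDH t⟩ : H) ∈ (⨅ α : Weight K H L, α.ker) := by
    simp only [Submodule.mem_iInf]
    exact fun β ↦ hker β
  rw [iInf_ker_weight_eq_bot, Submodule.mem_bot] at h12
  exact congrArg Subtype.val h12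

include hD hθ in
/-- An antiderivation of nonzero weight kills the Cartan subalgebra. -/
lemma apply_eq_zero_of_weight_ne_zero (hdim : 3 < finrank K L) (hθ0 : θ ≠ 0) (t : H) :
    D t = 0 := by
  have hmem (t : H) : (t : L) ∈ rootSpace H (0 : H → K) := mem_rootSpace_zero_iff.mpr t.2
  have hDθ (t : H) : D t ∈ rootSpace H θ := by
    rw [mem_rootSpace_iff]
    intro h
    have := lie_apply_eq hθ (hmem t) h
    simpa using this
  obtain ⟨h₀, hh₀⟩ : ∃ h, θ h ≠ 0 := by
    by_contra! hc
    exact hθ0 (LinearMap.ext hc)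
  have hswap (t h : H) : θ h • D t = θ t • D h := by
    have := smul_apply_eq hD hθ (hmem t) h
    rw [lie_skew, mem_rootSpace_iff.mp (hDθ h) t] at this
    simpa using this
  suffices hu : D h₀ = 0 by
    have := hswap t h₀
    rw [hu, smul_zero] at this
    exact (smul_eq_zero.mp this).resolve_left hh₀
  by_contra hu
  obtain ⟨g, hg⟩ := exists_weight (hDθ h₀) hu
  have hg0 : g.IsNonZero := by
    intro hc
    rw [Weight.IsZero, hg] at hc
    exact hθ0 (LinearMap.ext fun s ↦ congrFun hc s)
  obtain ⟨b, hb, hk, y, hy, hxy⟩ :=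
    exists_lie_ne_zero hdim hg0 (u := D h₀) (by rw [hg]; exact hDθ h₀) hu
  have hDy : D y ≠ 0 := by
    intro hc
    have := smul_apply_eq hD hθ hy h₀
    rw [hc, smul_zero] at this
    exact hxy (neg_eq_zero.mp this.symm)
  -- `D` vanishes on the kernel of `θ`, which forces `b` to vanish there as well
  obtain ⟨k, hk'⟩ := exists_eq_smul (a := g) (b := b) (fun s hs ↦ by
    have hs' : θ s = 0 := by rw [← hs, hg]
    have h1 := hswap s h₀
    rw [hs', zero_smul] at h1
    have h2 := smul_apply_eq hD hθ hy s
    rw [(smul_eq_zero.mp h1).resolve_left hh₀, zero_lie, neg_zero, hs'] at h2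
    simpa [hDy] using h2)
  exact hk k hk'

include hD hθ in
lemma eq_zero_of_homogeneous (hdim : 3 < finrank K L) : D = 0 := by
  have hDH (t : H) : D t = 0 := by
    by_cases h : θ = 0
    · exact apply_eq_zero_of_weight_zero hD hθ hdim h t
    · exact apply_eq_zero_of_weight_ne_zero hD hθ hdim h t
  have hstar {β : H → K} {x : L} (hx : x ∈ rootSpace H β) (hx0 : D x ≠ 0) (h : H) :
      2 * β h + θ h = 0 := by
    have := smul_apply_eq hD hθ hx h
    rw [hDH, zero_lie, neg_zero] at this
    exact (smul_eq_zero.mp this).resolve_right hx0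
  ext x
  refine induction_rootSpace (H := H) (P := fun x ↦ D x = 0) (by simp)
    (fun x y hx hy ↦ by simp [hx, hy]) (fun β x hx ↦ ?_) x
  by_contra hx0
  have hβ : β.IsNonZero := by
    intro hc
    rw [hc.eq] at hx
    exact hx0 (hDH ⟨x, mem_rootSpace_zero_iff.mp hx⟩)
  have hDx : D x ∈ rootSpace H ((-β : Weight K H L) : H → K) := by
    rw [mem_rootSpace_iff]
    intro h
    rw [lie_apply_eq hθ hx]
    congr 1
    simp only [Weight.coe_neg, Pi.neg_apply]
    linear_combination hstar hx hx0 h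
  have hkill {b : H → K} {y : L} (hy : y ∈ rootSpace H b) (hb : b ≠ β) : D y = 0 := by
    by_contra hy0
    refine hb (funext fun h ↦ ?_)
    have h1 : (2 : K) * (b h - β h) = 0 := by
      linear_combination hstar hy hy0 h - hstar hx hx0 h
    simpa [sub_eq_zero] using h1
  obtain ⟨b, hb, hk, y, hy, hxy⟩ :=
    exists_lie_ne_zero hdim (Weight.IsNonZero.neg hβ) hDx hx0
  have h1 : D y = 0 := hkill hy fun hc ↦ hk (-1) (by rw [hc]; simp)
  have h2 : D ⁅x, y⁆ = 0 := hkill (lie_mem hx hy) fun hc ↦ hb (by simpa using hc)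
  rw [hD, h1, lie_zero, sub_zero, neg_eq_zero] at h2
  exact hxy h2

end Homogeneous

/-! ### The space of antiderivations -/

/-- The antiderivations of `L`, as an `H`-submodule of the linear endomorphisms of `L`. -/
def antiderivations (H : LieSubalgebra K L) : LieSubmodule K H (L →ₗ[K] L) where
  carrier := {D | ∀ x y : L, D ⁅x, y⁆ = - ⁅D x, y⁆ - ⁅x, D y⁆}
  add_mem' {D E} hD hE x y := by
    simp only [LinearMap.add_apply, hD x y, hE x y, add_lie, lie_add]
    abel
  zero_mem' x y := by simp
  smul_mem' c D hD x y := by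
    simp only [LinearMap.smul_apply, hD x y, smul_lie, lie_smul, smul_sub, smul_neg]
  lie_mem {h D} hD x y := by
    have hD' : ∀ x y : L, D ⁅x, y⁆ = - ⁅D x, y⁆ - ⁅x, D y⁆ := hD
    have hact (z : L) : ⁅h, D⁆ z = ⁅(h : L), D z⁆ - D ⁅(h : L), z⁆ := LieHom.lie_apply D h z
    simp only [hact]
    rw [leibniz_lie (h : L) x y, map_add, hD' x y, hD' ⁅(h : L), x⁆ y,
      hD' x ⁅(h : L), y⁆]
    simp only [lie_sub, sub_lie, lie_neg, leibniz_lie (h : L) (D x) y,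
      leibniz_lie (h : L) x (D y)]
    abel

end NoAntiderivation

open LieAlgebra LieModule NoAntiderivation in
/-- A finite-dimensional simple Lie algebra of dimension `> 3` over an algebraically closed
field of characteristic `0` admits no nonzero antiderivation, i.e. no nonzero linear map `D`
with `D([x,y]) = -[D(x),y] - [x,D(y)]`. -/
theorem no_antiderivation
    (K : Type*) [Field K] [IsAlgClosed K] [CharZero K]
    (L : Type*) [LieRing L] [LieAlgebra K L] [FiniteDimensional K L]
    [LieAlgebra.IsSimple K L]
    (hdim : 3 < Module.finrank K L)
    (D : L →ₗ[K] L)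
    (hD : ∀ x y : L, D ⁅x, y⁆ = - ⁅D x, y⁆ - ⁅x, D y⁆) :
    D = 0 := by
  obtain ⟨a, ha⟩ := LieAlgebra.exists_isCartanSubalgebra_engel K L
  let H := LieSubalgebra.engel K a
  by_contra hD0
  have : Nontrivial (antiderivations H) :=
    ⟨⟨⟨D, hD⟩, 0, fun hc ↦ hD0 (congrArg Subtype.val hc)⟩⟩
  -- Lie's theorem gives a nonzero antiderivation that is an eigenvector for all of `H`
  obtain ⟨θ, hθ⟩ := exists_nontrivial_weightSpace_of_isSolvable K H (antiderivations H)
  obtain ⟨⟨⟨E, hE⟩, hEθ⟩, hE0⟩ := exists_ne (0 : weightSpace (antiderivations H) θ)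
  rw [mem_weightSpace] at hEθ
  have hE1 : E = 0 := eq_zero_of_homogeneous (H := H) (θ := θ) hE (fun h x ↦ by
    have h1 := LinearMap.congr_fun (congrArg Subtype.val (hEθ h)) x
    exact h1) hdim
  exact hE0 (Subtype.ext (Subtype.ext hE1))
end

section
/- Let 𝔤 be a finite-dimensional simple Lie algebra over an algebraically closed field of characteristic 0 with 𝔤 ≇ sl(2). Then any symmetric bilinear form φ on 𝔤 satisfying φ([x,y],z) + φ([z,x],y) + φ([y,z],x) = 0 for all x,y,z vanishes. -/
/-!
Fix a Cartan subalgebra `H` and let `x`, `y` be weight vectors of weights `α`, `β`. The cyclic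
identity applied to `h ∈ H`, `x`, `y` reads `(α h - β h) φ(x, y) + φ([x, y], h) = 0`
(`weight_relation`).

If `α`, `β` are linearly independent, then both `φ(x, y)` and `φ([x, y], H)` vanish: the second
is proportional to `α + β` as a function of `h`, the first term to `α - β`
(`form_eq_zero_of_linearIndependent`, `form_lie_cartan_eq_zero`). The cyclic identity, applied to
`x`, `y` and a third vector of weight `α + β` or `-(α + β)`, then shows that `φ([x, y], z) = 0` for
`z` of weight `±(α + β)`. So, if `α + β` is a root, `[x, y]` is orthogonal to `H` and to every root
space.

When `L` is not `sl(2)`, every root `γ` admits a root `α ≠ ±γ` with `γ(α^∨) ≠ 0`: otherwise the line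
`K γ` is stable under all reflections, irreducibility of the root system makes it the whole dual of
`H`, and `L` is spanned by a single `sl₂`-triple (`exists_root_not_orthogonal`). With an
`sl₂`-triple `(h, e, f)` for `α` and `x` of weight `γ`, the identity
`γ(α^∨) x = [e, [f, x]] - [f, [e, x]]` writes `x` through brackets of vectors of independent
weights. So all root spaces lie in the radical of `φ`. By the cyclic identity this radical is
closed under brackets, and `L` is generated by the root spaces, so `φ = 0`.
-/

open LieAlgebra LieAlgebra.IsKilling LieModule Module

namespace SymmetricCocycle

/-! ### Weight vectors and the cyclic identity -/

section Form

variable {K L : Type*} [Field K] [LieRing L] [LieAlgebra K L] {H : LieSubalgebra K L}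

/-- `x` is a simultaneous eigenvector (possibly zero) for the adjoint action of `H`, with
eigenvalues given by `α`. -/
def IsWeightVector (H : LieSubalgebra K L) (α : Dual K H) (x : L) : Prop :=
  ∀ h : H, ⁅(h : L), x⁆ = α h • x

lemma IsWeightVector.lie {α β : Dual K H} {x y : L} (hx : IsWeightVector H α x)
    (hy : IsWeightVector H β y) : IsWeightVector H (α + β) ⁅x, y⁆ := fun h ↦ by
  rw [leibniz_lie, hx h, hy h, smul_lie, lie_smul, LinearMap.add_apply, add_smul]

lemma linearIndependent_sub_right {α γ : Dual K H} (h : LinearIndependent K ![α, γ]) :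
    LinearIndependent K ![α, γ - α] := by
  rw [LinearIndependent.pair_iff] at h ⊢
  intro s t hst
  obtain ⟨h₁, h₂⟩ := h (s - t) t (by rw [← hst]; module)
  exact ⟨by simpa [h₂] using h₁, h₂⟩

lemma linearIndependent_neg_left {α γ : Dual K H} (h : LinearIndependent K ![α, γ]) :
    LinearIndependent K ![-α, γ] := by
  rw [LinearIndependent.pair_iff] at h ⊢
  intro s t hst
  obtain ⟨h₁, h₂⟩ := h (-s) t (by rw [← hst]; module)
  exact ⟨by simpa using h₁, h₂⟩

variable {φ : L →ₗ[K] L →ₗ[K] K} (hsymm : ∀ x y : L, φ x y = φ y x)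
  (hcoc : ∀ x y z : L, φ ⁅x, y⁆ z + φ ⁅z, x⁆ y + φ ⁅y, z⁆ x = 0)

include hsymm hcoc

lemma weight_relation {α β : Dual K H} {x y : L} (hx : IsWeightVector H α x)
    (hy : IsWeightVector H β y) (h : H) : (α h - β h) * φ x y + φ ⁅x, y⁆ h = 0 := by
  have := hcoc h x y
  rw [← lie_skew y, hx h, hy h, hsymm _ x] at this
  simp only [map_neg, map_smul, LinearMap.smul_apply, smul_eq_mul] at this
  linear_combination this

omit hsymm in
/-- As a functional on `H`, `φ z` is proportional to the weight `γ` of `z` (if `γ ≠ 0`). -/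
lemma weight_mul_form [IsLieAbelian H] {γ : Dual K H} {z : L} (hz : IsWeightVector H γ z)
    (h h' : H) : γ h * φ z h' = γ h' * φ z h := by
  have hab : ⁅(h : L), (h' : L)⁆ = 0 := by
    rw [← LieSubalgebra.coe_bracket, trivial_lie_zero]; rfl
  have := hcoc h h' z
  rw [hab, hz h', ← lie_skew z, hz h] at this
  simp only [map_neg, map_smul, map_zero, LinearMap.neg_apply, LinearMap.smul_apply,
    LinearMap.zero_apply, smul_eq_mul] at this
  linear_combination -this

lemma form_eq_zero_of_linearIndependent [CharZero K] [IsLieAbelian H] {α β : Dual K H}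
    (hind : LinearIndependent K ![α, β]) {x y : L} (hx : IsWeightVector H α x)
    (hy : IsWeightVector H β y) : φ x y = 0 := by
  rw [LinearIndependent.pair_iff] at hind
  by_contra hne
  have hγ : α + β ≠ 0 := fun h0 ↦ one_ne_zero (hind 1 1 (by simpa using h0)).1
  obtain ⟨h', hh'⟩ : ∃ h', (α + β) h' ≠ 0 := by
    by_contra! hall
    exact hγ (LinearMap.ext hall)
  -- Eliminating `φ ⁅x, y⁆ h` exhibits `α - β` as a multiple of `α + β`.
  have key : (α + β) h' • (α - β) = (α - β) h' • (α + β) := by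
    ext h
    have h₁ := weight_relation hsymm hcoc hx hy h
    have h₂ := weight_relation hsymm hcoc hx hy h'
    have h₃ := weight_mul_form hcoc (hx.lie hy) h h'
    refine mul_right_cancel₀ hne ?_
    simp only [LinearMap.smul_apply, LinearMap.sub_apply, LinearMap.add_apply,
      smul_eq_mul] at h₃ ⊢
    linear_combination (α h' + β h') * h₁ - (α h + β h) * h₂ + h₃
  obtain ⟨h₁, h₂⟩ := hind ((α + β) h' - (α - β) h') (-((α + β) h') - (α - β) h') (by
    rw [← sub_eq_zero.mpr key]; module)
  apply hh'
  linear_combination (h₁ - h₂) / 2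

lemma form_lie_cartan_eq_zero [CharZero K] [IsLieAbelian H] {α β : Dual K H}
    (hind : LinearIndependent K ![α, β]) {x y : L} (hx : IsWeightVector H α x)
    (hy : IsWeightVector H β y) (h : H) : φ ⁅x, y⁆ h = 0 := by
  simpa [form_eq_zero_of_linearIndependent hsymm hcoc hind hx hy] using
    weight_relation hsymm hcoc hx hy h

lemma form_lie_eq_zero_of_add [CharZero K] [IsLieAbelian H] {α β : Dual K H}
    (hind : LinearIndependent K ![α, β]) {x y z : L} (hx : IsWeightVector H α x)
    (hy : IsWeightVector H β y) (hz : IsWeightVector H (α + β) z) : φ ⁅x, y⁆ z = 0 := by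
  have h₁ : φ ⁅z, x⁆ y = 0 := by
    refine form_eq_zero_of_linearIndependent hsymm hcoc ?_ (hz.lie hx) hy
    rw [LinearIndependent.pair_iff] at hind ⊢
    intro s t hst
    obtain ⟨h₁, h₂⟩ := hind (2 * s) (s + t) (by rw [← hst]; module)
    have hs : s = 0 := by simpa using h₁
    exact ⟨hs, by simpa [hs] using h₂⟩
  have h₂ : φ ⁅y, z⁆ x = 0 := by
    refine form_eq_zero_of_linearIndependent hsymm hcoc ?_ (hy.lie hz) hx
    rw [LinearIndependent.pair_iff] at hind ⊢
    intro s t hst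
    obtain ⟨h₁, h₂⟩ := hind (s + t) (2 * s) (by rw [← hst]; module)
    have hs : s = 0 := by simpa using h₂
    exact ⟨hs, by simpa [hs] using h₁⟩
  simpa [h₁, h₂] using hcoc x y z

/-- The three values `φ ⁅x, y⁆ z`, `φ x ⁅y, z⁆`, `φ y ⁅z, x⁆` sum to zero by the cyclic identity.
Weighting them with `α + β`, `-α`, `-β` also gives zero, by the Jacobi identity, so they coincide
and, the characteristic not being `3`, vanish. -/
lemma form_lie_eq_zero_of_neg_add [CharZero K] [IsLieAbelian H] {α β : Dual K H}
    (hind : LinearIndependent K ![α, β]) {x y z : L} (hx : IsWeightVector H α x)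
    (hy : IsWeightVector H β y) (hz : IsWeightVector H (-(α + β)) z) : φ ⁅x, y⁆ z = 0 := by
  have hsum := hcoc x y z
  rw [hsymm _ y, hsymm _ x] at hsum
  have key : (φ ⁅x, y⁆ z - φ x ⁅y, z⁆) • α + (φ ⁅x, y⁆ z - φ y ⁅z, x⁆) • β = 0 := by
    ext h
    have h₁ := weight_relation hsymm hcoc (hx.lie hy) hz h
    have h₂ := weight_relation hsymm hcoc hx (hy.lie hz) h
    have h₃ := weight_relation hsymm hcoc hy (hz.lie hx) h
    have hjac : φ ⁅⁅x, y⁆, z⁆ h = φ ⁅x, ⁅y, z⁆⁆ h + φ ⁅y, ⁅z, x⁆⁆ h := by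
      have : ⁅⁅x, y⁆, z⁆ = ⁅x, ⁅y, z⁆⁆ + ⁅y, ⁅z, x⁆⁆ := by
        rw [lie_lie, ← lie_skew x z, lie_neg, sub_neg_eq_add]
      rw [this, map_add, LinearMap.add_apply]
    simp only [LinearMap.smul_apply, LinearMap.add_apply, LinearMap.neg_apply, smul_eq_mul,
      LinearMap.zero_apply] at h₁ h₂ h₃ ⊢
    linear_combination (h₁ - h₂ - h₃ - hjac) / 2
  obtain ⟨h₁, h₂⟩ := LinearIndependent.pair_iff.mp hind _ _ key
  linear_combination (hsum + h₁ + h₂) / 3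

end Form

/-! ### Root spaces of a simple Lie algebra -/

section Killing

variable {K L : Type*} [Field K] [CharZero K] [LieRing L] [LieAlgebra K L] [FiniteDimensional K L]
  [IsKilling K L] {H : LieSubalgebra K L} [H.IsCartanSubalgebra] [IsTriangularizable K H L]

lemma isWeightVector_of_mem {α : Weight K H L} {x : L} (hx : x ∈ rootSpace H α) :
    IsWeightVector H α.toLinear x := lie_eq_smul_of_mem_rootSpace hx

lemma isWeightVector_neg_of_mem {α : Weight K H L} {x : L} (hx : x ∈ rootSpace H (-α)) :
    IsWeightVector H (-α.toLinear) x := lie_eq_smul_of_mem_rootSpace hx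

/-- A subspace containing an `sl₂`-triple for each root is everything. -/
lemma eq_top_of_forall_sl2Triple (W : Submodule K L)
    (hW : ∀ α : Weight K H L, α.IsNonZero → ∃ h e f : L, IsSl2Triple h e f ∧
      e ∈ rootSpace H α ∧ f ∈ rootSpace H (-α) ∧ h ∈ W ∧ e ∈ W ∧ f ∈ W) : W = ⊤ := by
  have htop := congrArg LieSubmodule.toSubmodule
    (LieIdeal.restr_eq_iSup_sl2SubmoduleOfRoot (H := H) (⊤ : LieIdeal K L))
  rw [LieSubmodule.restr_toSubmodule, LieSubmodule.top_toSubmodule] at htop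
  rw [eq_top_iff, htop]
  simp only [LieSubmodule.iSup_toSubmodule, iSup_le_iff]
  intro α _ x hx
  obtain ⟨h, e, f, ht, he, hf, hh, he', hf'⟩ := hW α (H.isNonZero_coe_root α)
  obtain ⟨c₁, c₂, c₃, rfl⟩ := (mem_sl2SubalgebraOfRoot_iff (H.isNonZero_coe_root α) ht he hf).mp hx
  rw [ht.lie_e_f]
  exact W.add_mem (W.add_mem (W.smul_mem _ he') (W.smul_mem _ hf')) (W.smul_mem _ hh)

omit [FiniteDimensional K L] [IsKilling K L] in
/-- A Lie algebra spanned by an `sl₂`-triple is `sl(2)`. -/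
lemma nonempty_equiv_sl2 {h e f : L} (ht : IsSl2Triple h e f)
    (hspan : Submodule.span K {h, e, f} = ⊤) :
    Nonempty (L ≃ₗ⁅K⁆ LieAlgebra.SpecialLinear.sl (Fin 2) K) := by
  have htr : ∀ A : LieAlgebra.SpecialLinear.sl (Fin 2) K, A.1 1 1 = - A.1 0 0 := fun A ↦ by
    have : Matrix.trace A.1 = 0 := A.2
    rw [Matrix.trace_fin_two] at this
    linear_combination this
  have hhe := ht.lie_h_e_smul K
  have hhf := ht.lie_lie_smul_f K
  have heh : ⁅e, h⁆ = -((2 : K) • e) := by rw [← lie_skew, hhe]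
  have hfh : ⁅f, h⁆ = (2 : K) • f := by rw [← lie_skew, hhf, neg_neg]
  have hfe : ⁅f, e⁆ = -h := by rw [← lie_skew, ht.lie_e_f]
  let F : LieAlgebra.SpecialLinear.sl (Fin 2) K →ₗ⁅K⁆ L :=
    { toFun := fun A ↦ A.1 0 0 • h + A.1 0 1 • e + A.1 1 0 • f
      map_add' := fun A B ↦ by
        have hAB (i j) : (A + B).1 i j = A.1 i j + B.1 i j := rfl
        rw [hAB, hAB, hAB]; module
      map_smul' := fun c A ↦ by
        have hcA (i j) : (c • A).1 i j = c * A.1 i j := rfl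
        rw [hcA, hcA, hcA, RingHom.id_apply]; module
      map_lie' := fun {A B} ↦ by
        simp only [LieAlgebra.SpecialLinear.sl_bracket, Matrix.sub_apply, Matrix.mul_apply,
          Fin.sum_univ_two, htr, add_lie, lie_add, smul_lie, lie_smul, lie_self, ht.lie_e_f, hhe,
          hhf, heh, hfh, hfe]
        module }
  have hF : ∀ A, F A = A.1 0 0 • h + A.1 0 1 • e + A.1 1 0 • f := fun _ ↦ rfl
  have hinj : Function.Injective F := by
    refine (injective_iff_map_eq_zero F).mpr fun A hA ↦ ?_
    rw [hF] at hA
    -- Two applications of `ad h` separate the three eigenvectors.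
    have h₁ : (2 * A.1 0 1) • e - (2 * A.1 1 0) • f = 0 := by
      have := congrArg (⁅h, ·⁆) hA
      simp only [lie_add, lie_smul, lie_self, hhe, hhf, lie_zero] at this
      rw [← this]; module
    have h₂ : (4 * A.1 0 1) • e + (4 * A.1 1 0) • f = 0 := by
      have := congrArg (⁅h, ·⁆) h₁
      simp only [lie_sub, lie_smul, hhe, hhf, lie_zero] at this
      rw [← this]; module
    have h01 : A.1 0 1 = 0 := by
      have : (8 * A.1 0 1) • e = 0 := by
        calc (8 * A.1 0 1) • e = (2 : K) • ((2 * A.1 0 1) • e - (2 * A.1 1 0) • f) +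
              ((4 * A.1 0 1) • e + (4 * A.1 1 0) • f) := by module
          _ = 0 := by rw [h₁, h₂]; simp
      simpa [ht.e_ne_zero] using this
    have h10 : A.1 1 0 = 0 := by
      simpa [h01, ht.f_ne_zero] using h₂
    have h00 : A.1 0 0 = 0 := by
      simpa [h01, h10, ht.h_ne_zero] using hA
    ext i j
    fin_cases i <;> fin_cases j <;> simp [h00, h01, h10, htr]
  have hsurj : Function.Surjective F := by
    rw [← LieHom.coe_toLinearMap, ← LinearMap.range_eq_top, eq_top_iff, ← hspan,
      Submodule.span_le]
    have htr0 : ∀ a b c : K, !![a, b; c, -a] ∈ LieAlgebra.SpecialLinear.sl (Fin 2) K :=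
      fun a b c ↦ by
        change Matrix.trace !![a, b; c, -a] = 0
        simp [Matrix.trace_fin_two]
    rintro x (rfl | rfl | rfl)
    · exact ⟨⟨_, htr0 1 0 0⟩, by simp [hF]⟩
    · exact ⟨⟨_, htr0 0 1 0⟩, by simp [hF]⟩
    · exact ⟨⟨_, htr0 0 0 1⟩, by simp [hF]⟩
  exact ⟨(LieEquiv.ofBijective F ⟨hinj, hsurj⟩).symm⟩

variable (hnotsl2 : IsEmpty (L ≃ₗ⁅K⁆ LieAlgebra.SpecialLinear.sl (Fin 2) K))

include hnotsl2 in
/-- If `L` is not `sl(2)`, no root is orthogonal to all the roots other than itself and its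
negative: by irreducibility this would force the rank to be one. -/
lemma exists_root_not_orthogonal [LieAlgebra.IsSimple K L] {γ : Weight K H L} (hγ : γ.IsNonZero) :
    ∃ α : Weight K H L, α.IsNonZero ∧ LinearIndependent K ![α.toLinear, γ.toLinear] ∧
      γ (coroot α) ≠ 0 := by
  by_contra! hall
  have hγ0 : γ.toLinear ≠ 0 := by simpa using hγ
  have htop : Submodule.span K {γ.toLinear} = ⊤ := by
    refine RootPairing.IsIrreducible.eq_top_of_invtSubmodule_reflection (P := rootSystem H) _
      (fun i ↦ ?_) (by simpa using hγ0)
    have hi := H.isNonZero_coe_root i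
    rw [Module.End.mem_invtSubmodule, Submodule.span_singleton_le_iff_mem, Submodule.mem_comap]
    have hrefl : (rootSystem H).reflection i γ.toLinear =
        γ.toLinear - γ (coroot i.1) • i.1.toLinear := by
      simp [RootPairing.reflection_apply]
    erw [hrefl]
    by_cases hind : LinearIndependent K ![i.1.toLinear, γ.toLinear]
    · rw [hall i hi hind, zero_smul, sub_zero]
      exact Submodule.mem_span_singleton_self _
    · rw [LinearIndependent.pair_symm_iff, LinearIndependent.pair_iff' hγ0] at hind
      push Not at hind
      obtain ⟨a, ha⟩ := hind
      rw [← ha]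
      exact Submodule.sub_mem _ (Submodule.mem_span_singleton_self _) (Submodule.smul_mem _ _
        (Submodule.smul_mem _ _ (Submodule.mem_span_singleton_self _)))
  obtain ⟨h, e, f, ht, he, hf⟩ := exists_isSl2Triple_of_weight_isNonZero hγ
  have hh : h ∈ Submodule.span K {h, e, f} := Submodule.subset_span (by simp)
  have he' : e ∈ Submodule.span K {h, e, f} := Submodule.subset_span (by simp)
  have hf' : f ∈ Submodule.span K {h, e, f} := Submodule.subset_span (by simp)
  refine not_nonempty_iff.mpr hnotsl2 (nonempty_equiv_sl2 ht (eq_top_of_forall_sl2Triple (H := H) _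
    fun α hα ↦ ?_))
  obtain ⟨a, ha⟩ := Submodule.mem_span_singleton.mp (htop ▸ Submodule.mem_top : α.toLinear ∈ _)
  rcases eq_neg_or_eq_of_eq_smul γ α hα a (by
    ext x; exact (LinearMap.congr_fun ha x).symm) with rfl | rfl
  · exact ⟨-h, f, e, ht.symm, hf, by simpa using he, Submodule.neg_mem _ hh, hf', he'⟩
  · exact ⟨h, e, f, ht, he, hf, hh, he', hf'⟩

variable {φ : L →ₗ[K] L →ₗ[K] K} (hsymm : ∀ x y : L, φ x y = φ y x)
  (hcoc : ∀ x y z : L, φ ⁅x, y⁆ z + φ ⁅z, x⁆ y + φ ⁅y, z⁆ x = 0)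

include hsymm hcoc

/-- A bracket of weight vectors whose weights are independent and add up to a root lies in the
radical of `φ`. -/
lemma form_lie_eq_zero {α β : Dual K H} (hind : LinearIndependent K ![α, β]) {γ : Weight K H L}
    (hαβ : α + β = γ.toLinear) {x y : L} (hx : IsWeightVector H α x)
    (hy : IsWeightVector H β y) : φ ⁅x, y⁆ = 0 := by
  have hγ0 : γ.toLinear ≠ 0 := fun h0 ↦
    one_ne_zero (LinearIndependent.pair_iff.mp hind 1 1 (by simpa [hαβ] using h0)).1
  have hroot (δ : Weight K H L) (hδ : δ.IsNonZero) (z : L) (hz : IsWeightVector H δ.toLinear z) :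
      φ ⁅x, y⁆ z = 0 := by
    by_cases hi : LinearIndependent K ![γ.toLinear, δ.toLinear]
    · exact form_eq_zero_of_linearIndependent hsymm hcoc hi (hαβ ▸ hx.lie hy) hz
    rw [LinearIndependent.pair_iff' hγ0] at hi
    push Not at hi
    obtain ⟨a, ha⟩ := hi
    -- A root proportional to `γ` is `γ` or `-γ`.
    rcases eq_neg_or_eq_of_eq_smul γ δ hδ a (by
      ext x; exact (LinearMap.congr_fun ha x).symm) with rfl | rfl
    · exact form_lie_eq_zero_of_neg_add hsymm hcoc hind hx hy (by rw [hαβ]; exact hz)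
    · exact form_lie_eq_zero_of_add hsymm hcoc hind hx hy (by rw [hαβ]; exact hz)
  rw [← LinearMap.ker_eq_top]
  refine eq_top_of_forall_sl2Triple (H := H) _ fun δ hδ ↦ ?_
  obtain ⟨h, e, f, ht, he, hf⟩ := exists_isSl2Triple_of_weight_isNonZero hδ
  refine ⟨h, e, f, ht, he, hf, ?_, hroot δ hδ e (isWeightVector_of_mem he),
    hroot (-δ) hδ.neg f (isWeightVector_neg_of_mem hf)⟩
  rw [ht.h_eq_coroot hδ he hf]
  exact form_lie_cartan_eq_zero hsymm hcoc hind hx hy _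

include hnotsl2 in
/-- Every root space lies in the radical of `φ`. -/
lemma form_eq_zero_of_isWeightVector [LieAlgebra.IsSimple K L] {γ : Weight K H L}
    (hγ : γ.IsNonZero) {x : L} (hx : IsWeightVector H γ.toLinear x) : φ x = 0 := by
  obtain ⟨α, hα, hind, hc⟩ := exists_root_not_orthogonal hnotsl2 hγ
  obtain ⟨h, e, f, ht, he, hf⟩ := exists_isSl2Triple_of_weight_isNonZero hα
  replace hcoroot := ht.h_eq_coroot hα he hf
  have he := isWeightVector_of_mem he
  have hf := isWeightVector_neg_of_mem hf
  have hef : φ ⁅e, ⁅f, x⁆⁆ = 0 := by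
    refine form_lie_eq_zero hsymm hcoc (γ := γ) (β := -α.toLinear + γ.toLinear) ?_ (by abel)
      he (hf.lie hx)
    rw [neg_add_eq_sub]
    exact linearIndependent_sub_right hind
  have hfe : φ ⁅f, ⁅e, x⁆⁆ = 0 := by
    refine form_lie_eq_zero hsymm hcoc (γ := γ) (β := α.toLinear + γ.toLinear) ?_ (by abel)
      hf (he.lie hx)
    have := linearIndependent_sub_right (linearIndependent_neg_left hind)
    rwa [sub_neg_eq_add, add_comm] at this
  have key : γ (coroot α) • x = ⁅e, ⁅f, x⁆⁆ - ⁅f, ⁅e, x⁆⁆ := by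
    rw [← lie_lie, ht.lie_e_f, hcoroot]
    exact (hx (coroot α)).symm
  have : γ (coroot α) • φ x = 0 := by rw [← map_smul, key, map_sub, hef, hfe, sub_zero]
  exact (smul_eq_zero.mp this).resolve_left hc

end Killing

end SymmetricCocycle


/-- Let `𝔤` be a finite-dimensional simple Lie algebra over an algebraically closed field of
characteristic `0`, not isomorphic to `sl(2)`. Then any symmetric bilinear form `φ` on `𝔤`
with `φ([x,y],z) + φ([z,x],y) + φ([y,z],x) = 0` vanishes. -/
theorem symmetric_cocycle_form_vanishes
    (K : Type*) [Field K] [IsAlgClosed K] [CharZero K]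
    (L : Type*) [LieRing L] [LieAlgebra K L] [FiniteDimensional K L]
    [LieAlgebra.IsSimple K L]
    (hnotsl2 : IsEmpty (L ≃ₗ⁅K⁆ LieAlgebra.SpecialLinear.sl (Fin 2) K))
    (φ : L →ₗ[K] L →ₗ[K] K)
    (hsymm : ∀ x y : L, φ x y = φ y x)
    (hcoc : ∀ x y z : L, φ ⁅x, y⁆ z + φ ⁅z, x⁆ y + φ ⁅y, z⁆ x = 0) :
    φ = 0 := by
  obtain ⟨a, ha⟩ := LieAlgebra.exists_isCartanSubalgebra_engel K L
  let H := LieSubalgebra.engel K a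
  have hrad (γ : Weight K H L) (hγ : γ.IsNonZero) (x : L) (hx : x ∈ rootSpace H γ) : φ x = 0 :=
    SymmetricCocycle.form_eq_zero_of_isWeightVector hnotsl2 hsymm hcoc hγ
      (SymmetricCocycle.isWeightVector_of_mem hx)
  rw [← LinearMap.ker_eq_top]
  refine SymmetricCocycle.eq_top_of_forall_sl2Triple (H := H) _ fun γ hγ ↦ ?_
  obtain ⟨h, e, f, ht, he, hf⟩ := exists_isSl2Triple_of_weight_isNonZero hγ
  have he₀ := hrad γ hγ e he
  have hf₀ := hrad (-γ) hγ.neg f (by simpa using hf)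
  refine ⟨h, e, f, ht, he, hf, ?_, he₀, hf₀⟩
  -- The radical of `φ` is closed under brackets.
  ext z
  have := hcoc e f z
  rw [hsymm _ f, hsymm _ e, he₀, hf₀] at this
  simpa [ht.lie_e_f] using this
end
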